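/- arXiv:2601.06590 — 2 statements merged into one kernel-verified Lean document; each statement's English description precedes it below -/
import Mathlib

section
/- Let S(n) denote the maximum, over all simple graphs G on n vertices (n ≥ 3), of the sum of the edge density of G and the (3,1)-density d_{3,1}(G). Then S(n) converges as n → ∞ and its limit equals 5/4. -/
/-!
Writing `a x y` for the adjacency indicator and `d x` for the degree, a triple spanning `s` edges and
`c` cherries (paths with two edges) satisfies `3 * [s = 1] + c ≤ 3`, with equality when `s` is `1`
or `3`. Summing over triples, the number `K` of triples with exactly one edge satisfies
`6 * K ≤ n * (n - 1) * (n - 2) - ∑ x, d x * (d x - 1)` (`klCount_le`), and by Cauchy–Schwarz the last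
sum is at least `(∑ d) ^ 2 / n - ∑ d`. With edge density `ρ` this gives
`ρ + d_{3,1} ≤ 1 + (ρ - ρ ^ 2) * (n - 1) / (n - 2) ≤ 1 + (n - 1) / (4 * (n - 2))`
(`density_upper`).

In a disjoint union of two cliques every triple spans one or three edges, so the bound on `K` is an
equality (`le_klCount`); for cliques of nearly equal sizes all degrees lie between `(n - 3) / 2` and
`(n - 1) / 2`, which yields the matching lower bound (`density_lower`).

Sums over `k`-subsets are converted into sums over ordered tuples of distinct vertices.
-/

open Finset Filter
open scoped Classical Topology

/-- The number of edges of `G` inside a finite vertex set `s`. -/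
noncomputable def edgesOn {n : ℕ} (G : SimpleGraph (Fin n)) (s : Finset (Fin n)) : ℕ :=
  ((s.powersetCard 2).filter (fun e => ∃ a ∈ e, ∃ b ∈ e, G.Adj a b)).card

/-- The number of `k`-element vertex subsets of `G` whose induced subgraph has
exactly `ℓ` edges. -/
noncomputable def klCount {n : ℕ} (G : SimpleGraph (Fin n)) (k ℓ : ℕ) : ℕ :=
  ((Finset.univ.powersetCard k).filter (fun s => edgesOn G s = ℓ)).card

/-- The `(k,ℓ)`-density of `G`. -/
noncomputable def klDensity {n : ℕ} (G : SimpleGraph (Fin n)) (k ℓ : ℕ) : ℝ :=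
  (klCount G k ℓ : ℝ) / (n.choose k : ℝ)

/-- The edge density of `G`: the number of edges divided by `n.choose 2`. -/
noncomputable def edgeDensity' {n : ℕ} (G : SimpleGraph (Fin n)) : ℝ :=
  (edgesOn G Finset.univ : ℝ) / (n.choose 2 : ℝ)

/-! ### Ordered tuples and subsets -/

/-- The indicator of adjacency, as a real number. -/
noncomputable def adjInd {n : ℕ} (G : SimpleGraph (Fin n)) (x y : Fin n) : ℝ :=
  if G.Adj x y then 1 else 0

/-- The degree of a vertex, as a real number. -/
noncomputable def rdeg {n : ℕ} (G : SimpleGraph (Fin n)) (x : Fin n) : ℝ :=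
  ∑ y, adjInd G x y

/-- Each two-element set comes from exactly two ordered pairs. -/
lemma sum_pairs {n : ℕ} (f : Finset (Fin n) → ℝ) :
    ∑ x : Fin n, ∑ y : Fin n, (if x ≠ y then f {x, y} else 0)
      = 2 * ∑ t ∈ (univ : Finset (Fin n)).powersetCard 2, f t := by
  rw [← Fintype.sum_prod_type' (f := fun x y : Fin n => if x ≠ y then f {x, y} else 0),
    ← Finset.sum_filter,
    ← Finset.sum_fiberwise_of_maps_to (t := (univ : Finset (Fin n)).powersetCard 2)
      (g := fun p : Fin n × Fin n => ({p.1, p.2} : Finset (Fin n))), Finset.mul_sum]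
  · refine Finset.sum_congr rfl fun t ht => ?_
    obtain ⟨a, b, hab, rfl⟩ := Finset.card_eq_two.1 (Finset.mem_powersetCard.1 ht).2
    have : ((univ.filter fun p : Fin n × Fin n => p.1 ≠ p.2).filter
        fun p => ({p.1, p.2} : Finset (Fin n)) = {a, b}) = {(a, b), (b, a)} := by
      ext ⟨x, y⟩
      simp only [Finset.mem_filter, Finset.mem_univ, true_and, Finset.mem_insert,
        Finset.mem_singleton, Prod.mk.injEq, Finset.ext_iff]
      constructor
      · rintro ⟨h1, h2⟩
        have hx := h2 x
        have hy := h2 y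
        grind
      · grind
    rw [this, Finset.sum_pair (by grind), Finset.pair_comm b a]
    ring
  · rintro ⟨x, y⟩ h
    simp only [Finset.mem_filter, Finset.mem_univ, true_and] at h
    simp [Finset.mem_powersetCard, Finset.card_pair h]

/-- Each three-element set comes from exactly six ordered triples. -/
lemma sum_triples {n : ℕ} (f : Finset (Fin n) → ℝ) :
    ∑ x : Fin n, ∑ y : Fin n, ∑ z : Fin n,
        (if x ≠ y ∧ x ≠ z ∧ y ≠ z then f {x, y, z} else 0)
      = 6 * ∑ t ∈ (univ : Finset (Fin n)).powersetCard 3, f t := by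
  have h1 : ∑ x : Fin n, ∑ y : Fin n, ∑ z : Fin n,
        (if x ≠ y ∧ x ≠ z ∧ y ≠ z then f {x, y, z} else 0)
      = ∑ p : Fin n × Fin n × Fin n,
        (if p.1 ≠ p.2.1 ∧ p.1 ≠ p.2.2 ∧ p.2.1 ≠ p.2.2 then f {p.1, p.2.1, p.2.2} else 0) := by
    simp only [Fintype.sum_prod_type]
  rw [h1, ← Finset.sum_filter,
    ← Finset.sum_fiberwise_of_maps_to (t := (univ : Finset (Fin n)).powersetCard 3)
      (g := fun p : Fin n × Fin n × Fin n => ({p.1, p.2.1, p.2.2} : Finset (Fin n))),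
    Finset.mul_sum]
  · refine Finset.sum_congr rfl fun t ht => ?_
    obtain ⟨a, b, c, hab, hac, hbc, rfl⟩ :=
      Finset.card_eq_three.1 (Finset.mem_powersetCard.1 ht).2
    have : ((univ.filter fun p : Fin n × Fin n × Fin n =>
          p.1 ≠ p.2.1 ∧ p.1 ≠ p.2.2 ∧ p.2.1 ≠ p.2.2).filter
        fun p => ({p.1, p.2.1, p.2.2} : Finset (Fin n)) = {a, b, c})
        = {(a, b, c), (a, c, b), (b, a, c), (b, c, a), (c, a, b), (c, b, a)} := by
      ext ⟨x, y, z⟩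
      simp only [Finset.mem_filter, Finset.mem_univ, true_and, Finset.mem_insert,
        Finset.mem_singleton, Prod.mk.injEq, Finset.ext_iff]
      constructor
      · rintro ⟨h1, h2⟩
        have hx := h2 x
        have hy := h2 y
        have hz := h2 z
        grind
      · rintro (⟨rfl, rfl, rfl⟩ | ⟨rfl, rfl, rfl⟩ | ⟨rfl, rfl, rfl⟩ | ⟨rfl, rfl, rfl⟩ |
          ⟨rfl, rfl, rfl⟩ | ⟨rfl, rfl, rfl⟩) <;> exact ⟨by grind, by grind⟩
    rw [Finset.sum_congr rfl (g := fun _ => f {a, b, c})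
      (fun p hp => by rw [(Finset.mem_filter.1 hp).2]), this, Finset.sum_const]
    have hc : ({(a, b, c), (a, c, b), (b, a, c), (b, c, a), (c, a, b), (c, b, a)} :
        Finset (Fin n × Fin n × Fin n)).card = 6 := by
      repeat rw [Finset.card_insert_of_notMem (by grind)]
      simp
    rw [hc]
    simp
  · rintro ⟨x, y, z⟩ h
    simp only [Finset.mem_filter, Finset.mem_univ, true_and] at h
    simp only [Finset.mem_powersetCard, Finset.subset_univ, true_and]
    exact Finset.card_eq_three.2 ⟨x, y, z, h.1, h.2.1, h.2.2, rfl⟩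

/-! ### Edge counts -/

lemma exists_adj_pair {n : ℕ} (G : SimpleGraph (Fin n)) (x y : Fin n) :
    (∃ a ∈ ({x, y} : Finset (Fin n)), ∃ b ∈ ({x, y} : Finset (Fin n)), G.Adj a b)
      ↔ G.Adj x y := by
  simp [G.adj_comm y x]

lemma two_mul_edges {n : ℕ} (G : SimpleGraph (Fin n)) :
    2 * (edgesOn G univ : ℝ) = ∑ x, rdeg G x := by
  unfold edgesOn rdeg adjInd
  rw [Finset.card_filter]
  push_cast
  rw [← sum_pairs]
  refine Finset.sum_congr rfl fun x _ => Finset.sum_congr rfl fun y _ => ?_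
  rw [if_congr (exists_adj_pair G x y) rfl rfl]
  by_cases h : G.Adj x y
  · simp [h, h.ne]
  · simp [h]

lemma edgesOn_triple {n : ℕ} (G : SimpleGraph (Fin n)) {x y z : Fin n}
    (hxy : x ≠ y) (hxz : x ≠ z) (hyz : y ≠ z) :
    edgesOn G {x, y, z} = (if G.Adj x y then 1 else 0) + (if G.Adj x z then 1 else 0)
      + (if G.Adj y z then 1 else 0) := by
  have h : ({x, y, z} : Finset (Fin n)).powersetCard 2 = {{x, y}, {x, z}, {y, z}} := by
    ext t
    simp only [Finset.mem_powersetCard, Finset.mem_insert, Finset.mem_singleton]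
    constructor
    · rintro ⟨h1, h2⟩
      obtain ⟨a, b, hab, rfl⟩ := Finset.card_eq_two.1 h2
      have ha := h1 (Finset.mem_insert_self a {b})
      have hb := h1 (Finset.mem_insert_of_mem (Finset.mem_singleton_self b))
      simp only [Finset.mem_insert, Finset.mem_singleton] at ha hb
      have := Finset.pair_comm a b
      grind
    · rintro (rfl | rfl | rfl)
      · exact ⟨by grind, Finset.card_pair hxy⟩
      · exact ⟨by grind, Finset.card_pair hxz⟩
      · exact ⟨by grind, Finset.card_pair hyz⟩
  unfold edgesOn
  rw [h, Finset.card_filter, Finset.sum_insert, Finset.sum_insert, Finset.sum_singleton]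
  · simp only [exists_adj_pair]
    ring
  · simp only [Finset.mem_singleton, Finset.ext_iff, Finset.mem_insert]
    intro h
    have := h x
    grind
  · simp only [Finset.mem_singleton, Finset.ext_iff, Finset.mem_insert, not_or]
    refine ⟨fun h => ?_, fun h => ?_⟩
    · have := h y
      grind
    · have := h x
      grind

/-! ### Cherries and triples with one edge -/

/-- The indicator that `y` and `z` are the two ends of a cherry centred at `x`. -/
noncomputable def cherry {n : ℕ} (G : SimpleGraph (Fin n)) (x y z : Fin n) : ℝ :=
  if y ≠ z then adjInd G x y * adjInd G x z else 0

lemma sum_cherry {n : ℕ} (G : SimpleGraph (Fin n)) :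
    ∑ x, ∑ y, ∑ z, cherry G x y z = ∑ x, rdeg G x * (rdeg G x - 1) := by
  refine Finset.sum_congr rfl fun x _ => ?_
  have h : ∀ y z, cherry G x y z
      = adjInd G x y * adjInd G x z - if y = z then adjInd G x y else 0 := by
    intro y z
    unfold cherry adjInd
    by_cases h : y = z
    · subst h
      by_cases h' : G.Adj x y <;> simp [h']
    · simp [h]
  simp only [h, Finset.sum_sub_distrib, Finset.sum_ite_eq, Finset.mem_univ, if_true]
  rw [mul_sub, mul_one]
  unfold rdeg
  rw [Finset.sum_mul_sum]

/-- Six times the number of triples with one edge, as a sum over ordered triples. -/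
lemma six_mul_klCount {n : ℕ} (G : SimpleGraph (Fin n)) :
    6 * (klCount G 3 1 : ℝ) = ∑ x : Fin n, ∑ y : Fin n, ∑ z : Fin n,
        (if x ≠ y ∧ x ≠ z ∧ y ≠ z then (if edgesOn G {x, y, z} = 1 then (1 : ℝ) else 0) else 0) := by
  rw [sum_triples (fun t => if edgesOn G t = 1 then (1 : ℝ) else 0)]
  unfold klCount
  rw [Finset.card_filter]
  push_cast
  rfl

lemma six_mul_choose (n : ℕ) :
    6 * (n.choose 3 : ℝ) = ∑ x : Fin n, ∑ y : Fin n, ∑ z : Fin n,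
        (if x ≠ y ∧ x ≠ z ∧ y ≠ z then (1 : ℝ) else 0) := by
  rw [sum_triples (fun _ => (1 : ℝ))]
  simp

/-- Every ordered triple has three potential centres of a cherry, and by symmetry each position
contributes the same total. -/
lemma sum_cherry_sym {n : ℕ} (G : SimpleGraph (Fin n)) :
    ∑ x, ∑ y, ∑ z, (cherry G x y z + cherry G y x z + cherry G z x y)
      = 3 * ∑ x, rdeg G x * (rdeg G x - 1) := by
  simp only [Finset.sum_add_distrib]
  rw [sum_cherry]
  have h1 : ∑ x, ∑ y, ∑ z, cherry G y x z = ∑ x, rdeg G x * (rdeg G x - 1) := by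
    rw [Finset.sum_comm, sum_cherry]
  have h2 : ∑ x, ∑ y, ∑ z, cherry G z x y = ∑ x, rdeg G x * (rdeg G x - 1) := by
    rw [← sum_cherry G, Finset.sum_congr rfl fun x _ => Finset.sum_comm, Finset.sum_comm]
  rw [h1, h2]
  ring

lemma triple_le {n : ℕ} (G : SimpleGraph (Fin n)) (x y z : Fin n) :
    3 * (if x ≠ y ∧ x ≠ z ∧ y ≠ z then (if edgesOn G {x, y, z} = 1 then (1 : ℝ) else 0) else 0)
      + (cherry G x y z + cherry G y x z + cherry G z x y)
      ≤ 3 * (if x ≠ y ∧ x ≠ z ∧ y ≠ z then (1 : ℝ) else 0) := by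
  by_cases h : x ≠ y ∧ x ≠ z ∧ y ≠ z
  · obtain ⟨hxy, hxz, hyz⟩ := h
    rw [edgesOn_triple G hxy hxz hyz]
    simp only [cherry, adjInd, G.adj_comm y x, G.adj_comm z x, G.adj_comm z y]
    by_cases h1 : G.Adj x y <;> by_cases h2 : G.Adj x z <;> by_cases h3 : G.Adj y z <;>
      simp [h1, h2, h3, hxy, hxz, hyz]; norm_num
  · have hc : cherry G x y z = 0 ∧ cherry G y x z = 0 ∧ cherry G z x y = 0 := by
      have hl : ∀ v, adjInd G v v = 0 := fun v => by simp [adjInd]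
      unfold cherry
      by_cases h1 : x = y
      · subst h1; simp [hl]
      by_cases h2 : x = z
      · subst h2; simp [hl]
      have h3 : y = z := by tauto
      subst h3; simp [hl]
    rw [if_neg h, if_neg h, hc.1, hc.2.1, hc.2.2]
    simp

/-- When every triple spans one or three edges, the reverse of `triple_le` holds too. -/
lemma triple_eq {n : ℕ} (G : SimpleGraph (Fin n))
    (hG : ∀ x y z : Fin n, x ≠ y → x ≠ z → y ≠ z →
      edgesOn G {x, y, z} = 1 ∨ edgesOn G {x, y, z} = 3) (x y z : Fin n) :
    3 * (if x ≠ y ∧ x ≠ z ∧ y ≠ z then (1 : ℝ) else 0) ≤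
    3 * (if x ≠ y ∧ x ≠ z ∧ y ≠ z then (if edgesOn G {x, y, z} = 1 then (1 : ℝ) else 0) else 0)
      + (cherry G x y z + cherry G y x z + cherry G z x y) := by
  by_cases h : x ≠ y ∧ x ≠ z ∧ y ≠ z
  · obtain ⟨hxy, hxz, hyz⟩ := h
    have := hG x y z hxy hxz hyz
    rw [edgesOn_triple G hxy hxz hyz] at this ⊢
    simp only [cherry, adjInd, G.adj_comm y x, G.adj_comm z x, G.adj_comm z y]
    by_cases h1 : G.Adj x y <;> by_cases h2 : G.Adj x z <;> by_cases h3 : G.Adj y z <;>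
      simp [h1, h2, h3, hxy, hxz, hyz] at this ⊢; norm_num
  · have hc : ∀ u v w, 0 ≤ cherry G u v w := by
      intro u v w
      unfold cherry adjInd
      positivity
    rw [if_neg h, if_neg h]
    linarith [hc x y z, hc y x z, hc z x y]

lemma klCount_le {n : ℕ} (G : SimpleGraph (Fin n)) :
    6 * (klCount G 3 1 : ℝ) + ∑ x, rdeg G x * (rdeg G x - 1) ≤ 6 * (n.choose 3 : ℝ) := by
  have h :
      3 * (6 * (klCount G 3 1 : ℝ)) + 3 * ∑ x, rdeg G x * (rdeg G x - 1)
        ≤ 3 * (6 * (n.choose 3 : ℝ)) := by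
    rw [six_mul_klCount, six_mul_choose, ← sum_cherry_sym]
    simp only [Finset.mul_sum, ← Finset.sum_add_distrib]
    exact Finset.sum_le_sum fun x _ => Finset.sum_le_sum fun y _ => Finset.sum_le_sum fun z _ =>
      triple_le G x y z
  linarith

lemma le_klCount {n : ℕ} (G : SimpleGraph (Fin n))
    (hG : ∀ x y z : Fin n, x ≠ y → x ≠ z → y ≠ z →
      edgesOn G {x, y, z} = 1 ∨ edgesOn G {x, y, z} = 3) :
    6 * (n.choose 3 : ℝ) ≤ 6 * (klCount G 3 1 : ℝ) + ∑ x, rdeg G x * (rdeg G x - 1) := by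
  have h :
      3 * (6 * (n.choose 3 : ℝ))
        ≤ 3 * (6 * (klCount G 3 1 : ℝ)) + 3 * ∑ x, rdeg G x * (rdeg G x - 1) := by
    rw [six_mul_klCount, six_mul_choose, ← sum_cherry_sym]
    simp only [Finset.mul_sum, ← Finset.sum_add_distrib]
    exact Finset.sum_le_sum fun x _ => Finset.sum_le_sum fun y _ => Finset.sum_le_sum fun z _ =>
      triple_eq G hG x y z
  linarith

/-! ### Upper bound on the density sum -/

lemma six_mul_choose_three {n : ℕ} (hn : 3 ≤ n) :
    6 * (n.choose 3 : ℝ) = n * (n - 1) * (n - 2) := by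
  obtain ⟨m, rfl⟩ := Nat.exists_eq_add_of_le' hn
  have h := Nat.descFactorial_eq_factorial_mul_choose (m + 3) 3
  simp only [Nat.descFactorial_succ, Nat.descFactorial_zero, Nat.factorial] at h
  have e1 : m + 3 - 2 = m + 1 := by omega
  have e2 : m + 3 - 1 = m + 2 := by omega
  rw [e1, e2] at h
  have h' := congrArg (Nat.cast (R := ℝ)) h
  push_cast at h' ⊢
  linarith

lemma density_upper {n : ℕ} (hn : 3 ≤ n) (G : SimpleGraph (Fin n)) :
    edgeDensity' G + klDensity G 3 1 ≤ 1 + (n - 1) / (4 * (n - 2)) := by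
  have hn' : (3 : ℝ) ≤ n := by exact_mod_cast hn
  have hE := two_mul_edges G
  have hK := klCount_le G
  have hcs : (∑ x, rdeg G x) ^ 2 ≤ (n : ℝ) * ∑ x, rdeg G x ^ 2 := by
    simpa using sq_sum_le_card_mul_sum_sq (s := (univ : Finset (Fin n))) (f := rdeg G)
  have hs : ∑ x, rdeg G x * (rdeg G x - 1) = ∑ x, rdeg G x ^ 2 - ∑ x, rdeg G x := by
    rw [← Finset.sum_sub_distrib]
    exact Finset.sum_congr rfl fun x _ => by ring
  rw [hs, ← hE] at hK
  rw [← hE] at hcs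
  have h3 := six_mul_choose_three hn
  have hc3 : (n.choose 3 : ℝ) = n * (n - 1) * (n - 2) / 6 := by linarith
  have hc2 : (n.choose 2 : ℝ) = n * (n - 1) / 2 := Nat.cast_choose_two ℝ n
  rw [h3] at hK
  unfold edgeDensity' klDensity
  rw [hc3, hc2]
  generalize (edgesOn G univ : ℝ) = E at *
  generalize (klCount G 3 1 : ℝ) = K at *
  generalize ∑ x, rdeg G x ^ 2 = Q at *
  generalize (n : ℝ) = N at *
  -- `ρ` is the edge density
  obtain ⟨ρ, rfl⟩ : ∃ ρ, E = ρ * (N * (N - 1) / 2) :=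
    ⟨E / (N * (N - 1) / 2), by
      have : N - 1 ≠ 0 := by linarith
      have : N ≠ 0 := by linarith
      field_simp⟩
  have p0 : 0 < N := by linarith
  have p1 : 0 < N - 1 := by linarith
  have p2 : 0 < N - 2 := by linarith
  have hQ : ρ ^ 2 * N * (N - 1) ^ 2 ≤ Q := by
    refine le_of_mul_le_mul_left ?_ p0
    linarith
  rw [mul_div_cancel_right₀ _ (by positivity)]
  have hKb : K / (N * (N - 1) * (N - 2) / 6) ≤ 1 - (ρ ^ 2 * (N - 1) - ρ) / (N - 2) := by
    rw [div_le_iff₀ (by positivity)]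
    have : (1 - (ρ ^ 2 * (N - 1) - ρ) / (N - 2)) * (N * (N - 1) * (N - 2) / 6)
        = (N * (N - 1) * (N - 2) - ρ ^ 2 * N * (N - 1) ^ 2 + ρ * N * (N - 1)) / 6 := by
      field_simp
      ring
    rw [this]
    linarith
  have hfin : ρ + (1 - (ρ ^ 2 * (N - 1) - ρ) / (N - 2))
      = 1 + (N - 1) / (4 * (N - 2)) - (N - 1) / (N - 2) * (ρ - 1 / 2) ^ 2 := by
    field_simp
    ring
  have : 0 ≤ (N - 1) / (N - 2) * (ρ - 1 / 2) ^ 2 := by positivity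
  linarith

/-! ### The extremal construction -/

/-- The disjoint union of two cliques on `Fin n`: the even and the odd vertices. -/
def twoCliques (n : ℕ) : SimpleGraph (Fin n) where
  Adj x y := x ≠ y ∧ x.val % 2 = y.val % 2
  symm := ⟨fun _ _ h => ⟨h.1.symm, h.2.symm⟩⟩
  loopless := ⟨fun _ h => h.1 rfl⟩

lemma twoCliques_triple {n : ℕ} (x y z : Fin n) (hxy : x ≠ y) (hxz : x ≠ z) (hyz : y ≠ z) :
    edgesOn (twoCliques n) {x, y, z} = 1 ∨ edgesOn (twoCliques n) {x, y, z} = 3 := by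
  rw [edgesOn_triple _ hxy hxz hyz]
  simp only [twoCliques, ne_eq, hxy, hxz, hyz, not_false_eq_true, true_and]
  have hx := Nat.mod_two_eq_zero_or_one x
  have hy := Nat.mod_two_eq_zero_or_one y
  have hz := Nat.mod_two_eq_zero_or_one z
  rcases hx with hx | hx <;> rcases hy with hy | hy <;> rcases hz with hz | hz <;>
    simp [hx, hy, hz]

lemma twoCliques_rdeg {n : ℕ} (x : Fin n) :
    rdeg (twoCliques n) x = ((n.count (fun k => k ≡ x.val [MOD 2]) : ℕ) : ℝ) - 1 := by
  have h1 : ∀ y, adjInd (twoCliques n) x y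
      = (if y.val ≡ x.val [MOD 2] then (1 : ℝ) else 0) - if x = y then 1 else 0 := by
    intro y
    by_cases h : x = y
    · subst h
      simp [adjInd, Nat.ModEq]
    · simp [adjInd, twoCliques, Nat.ModEq, h, eq_comm]
  unfold rdeg
  simp only [h1, Finset.sum_sub_distrib, Finset.sum_ite_eq, Finset.mem_univ, if_true]
  rw [Nat.count_eq_card_filter_range, Finset.card_filter,
    Finset.sum_range (fun k => if k ≡ x.val [MOD 2] then 1 else 0)]
  push_cast
  rfl

lemma twoCliques_rdeg_bounds {n : ℕ} (x : Fin n) :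
    ((n : ℝ) - 3) / 2 ≤ rdeg (twoCliques n) x ∧ rdeg (twoCliques n) x ≤ ((n : ℝ) - 1) / 2 := by
  rw [twoCliques_rdeg, Nat.count_modEq_card n (by norm_num)]
  have key : n ≤ 2 * (n / 2 + if x.val % 2 < n % 2 then 1 else 0) + 1 ∧
      2 * (n / 2 + if x.val % 2 < n % 2 then 1 else 0) ≤ n + 1 := by
    split_ifs <;> omega
  have k1 := key.1
  have k2 := key.2
  generalize n / 2 + (if x.val % 2 < n % 2 then 1 else 0) = c at *
  have k1' : (n : ℝ) ≤ 2 * c + 1 := by exact_mod_cast k1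
  have k2' : (2 : ℝ) * c ≤ n + 1 := by exact_mod_cast k2
  constructor <;> linarith

lemma density_lower {n : ℕ} (hn : 3 ≤ n) :
    (n - 3) / (2 * (n - 1)) + (1 - (n - 3) / (4 * (n - 2)))
      ≤ edgeDensity' (twoCliques n) + klDensity (twoCliques n) 3 1 := by
  have hn' : (3 : ℝ) ≤ n := by exact_mod_cast hn
  have hE := two_mul_edges (twoCliques n)
  have hK := le_klCount (twoCliques n) twoCliques_triple
  have hElow : (n : ℝ) * ((n - 3) / 2) ≤ ∑ x, rdeg (twoCliques n) x := by
    simpa using Finset.card_nsmul_le_sum univ (rdeg (twoCliques n)) (((n : ℝ) - 3) / 2)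
      fun x _ => (twoCliques_rdeg_bounds x).1
  have hQ : ∑ x, rdeg (twoCliques n) x * (rdeg (twoCliques n) x - 1)
      ≤ (n : ℝ) * ((n - 1) / 2 * ((n - 3) / 2)) := by
    have := Finset.sum_le_card_nsmul univ
      (fun x => rdeg (twoCliques n) x * (rdeg (twoCliques n) x - 1))
      (((n : ℝ) - 1) / 2 * ((n - 3) / 2)) fun x _ => by
        obtain ⟨h1, h2⟩ := twoCliques_rdeg_bounds x
        nlinarith
    simpa using this
  rw [← hE] at hElow
  have h3 := six_mul_choose_three hn
  have hc3 : (n.choose 3 : ℝ) = n * (n - 1) * (n - 2) / 6 := by linarith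
  have hc2 : (n.choose 2 : ℝ) = n * (n - 1) / 2 := Nat.cast_choose_two ℝ n
  rw [h3] at hK
  unfold edgeDensity' klDensity
  rw [hc3, hc2]
  generalize (edgesOn (twoCliques n) univ : ℝ) = E at *
  generalize (klCount (twoCliques n) 3 1 : ℝ) = K at *
  generalize (n : ℝ) = N at *
  have p0 : 0 < N := by linarith
  have p1 : 0 < N - 1 := by linarith
  have p2 : 0 < N - 2 := by linarith
  refine add_le_add ?_ ?_
  · rw [le_div_iff₀ (by positivity)]
    have : (N - 3) / (2 * (N - 1)) * (N * (N - 1) / 2) = N * ((N - 3) / 2) / 2 := by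
      field_simp
    linarith
  · rw [le_div_iff₀ (by positivity)]
    have : (1 - (N - 3) / (4 * (N - 2))) * (N * (N - 1) * (N - 2) / 6)
        = (N * (N - 1) * (N - 2) - N * ((N - 1) / 2 * ((N - 3) / 2))) / 6 := by
      field_simp
      ring
    linarith

/-! ### The limit -/

/-- A quotient of two monic linear functions of `n` tends to `1`. -/
lemma tendsto_ratio (a b : ℝ) :
    Tendsto (fun n : ℕ => ((n : ℝ) - a) / ((n : ℝ) - b)) atTop (𝓝 1) := by
  have h : Tendsto (fun n : ℕ => (n : ℝ) - b) atTop atTop :=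
    tendsto_atTop_add_const_right _ (-b) tendsto_natCast_atTop_atTop
  have h2 : Tendsto (fun n : ℕ => 1 + (b - a) / ((n : ℝ) - b)) atTop (𝓝 (1 + 0)) :=
    tendsto_const_nhds.add (h.const_div_atTop (b - a))
  rw [add_zero] at h2
  refine h2.congr' ?_
  filter_upwards [h.eventually_gt_atTop 0] with n hn
  field_simp
  ring

/-- The maximum over `n`-vertex graphs (`n ≥ 3`) of the sum of the edge density
and the `(3,1)`-density tends to `5/4`. -/
theorem edgePlusThreeOne (S : ℕ → ℝ)
    (hS : ∀ n, 3 ≤ n →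
      IsGreatest {d : ℝ | ∃ G : SimpleGraph (Fin n),
        d = edgeDensity' G + klDensity G 3 1} (S n)) :
    Tendsto S atTop (𝓝 (5 / 4 : ℝ)) := by
  have hup : Tendsto (fun n : ℕ => 1 + ((n : ℝ) - 1) / (4 * (n - 2))) atTop (𝓝 (5 / 4)) := by
    have h := ((tendsto_ratio 1 2).const_mul (1 / 4)).const_add 1
    norm_num at h
    exact h.congr fun n => by rw [← div_div, div_right_comm]; ring
  have hlow : Tendsto (fun n : ℕ => ((n : ℝ) - 3) / (2 * (n - 1)) + (1 - (n - 3) / (4 * (n - 2))))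
      atTop (𝓝 (5 / 4)) := by
    have h := ((tendsto_ratio 3 1).const_mul (1 / 2)).add
      (((tendsto_ratio 3 2).const_mul (1 / 4)).const_sub 1)
    norm_num at h
    exact h.congr fun n => by
      rw [← div_div, div_right_comm, ← div_div, div_right_comm (_ - _) 4]; ring
  refine tendsto_of_tendsto_of_tendsto_of_le_of_le' hlow hup ?_ ?_
  · filter_upwards [eventually_ge_atTop 3] with n hn
    exact (density_lower hn).trans ((hS n hn).2 ⟨twoCliques n, rfl⟩)
  · filter_upwards [eventually_ge_atTop 3] with n hn
    obtain ⟨G, hG⟩ := (hS n hn).1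
    rw [hG]
    exact density_upper hn G
end

section
/- Let D(n) denote the maximum edge density over all C5^-‑free 3-uniform hypergraphs on n vertices (n ≥ 5). Then D(n) converges as n → ∞ and its limit equals 1/4. -/
/-!
Upper bound. Write `N(ab)` for the set of vertices completing `a, b` to an edge. If `H` contains
neither `C5⁻` nor `K4⁻`, then for each triple `a, b, c` at most one of the following four things
happens: `abc` is an edge, or two of the sets `N(ab)`, `N(bc)`, `N(ca)` meet (three choices of the
two sets). Indeed `x ∈ N(ab) ∩ N(ac)` and `y ∈ N(bc) ∩ N(ba)` give the `C5⁻` on `c, x, a, b, y`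
(or a `K4⁻` if `x = y`), while `x ∈ N(ab) ∩ N(ac)` together with the edge `abc` is a `K4⁻`. Call
an ordered triple `(a, b, c)` with `N(ab) ∩ N(ac)` nonempty a cherry at `a`: it says that `b` and
`c` have a common neighbour in the link graph of `a`. In any graph at least as many ordered pairs
have a common neighbour as are adjacent, because the vertices with a common neighbour with `b`
number at least the average degree of the neighbours of `b`, and summing `deg x / deg b` over
adjacent ordered pairs gives at least the number of these pairs, by AM-GM. So the cherries are at
least as many as the ordered edges, and summing over all triples gives `4 · 6|H| ≤ n³`.

A `C5⁻`-free `H` may contain `K4⁻`, but only few copies: two vertices that both form a `K4⁻` as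
apex over the same triple give a `C5⁻`. To profit from this, a cherry at `a` is weighted by
`|N(ab) ∩ N(ac)| / max(|N(ab)|, t)`. The argument above then goes through with total error
`O(n³ / t + t n²)` (`sum_cherryWeight_ge`, `sum_edge_cherryWeight_le`, `budget`,
`ordered_edges_le`), and `t = √n` makes this `o(n³)`.

Lower bound. On `{0, …, n - 1}` take as edges the triples whose ternary expansions, read from the
last digit, agree up to some position at which all three digits differ. This is an iterated
balanced tripartite construction. In a `C5⁻` all pairs among `v0, v1, v2, v3` would first differ
at the same position (`ternary_c5m_free`), which is impossible with three digits. Counting by the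
last digit (`ternaryTriples_rec`) gives `n³ / 4 - O(n²)` ordered edges.
-/


open Finset Filter
open scoped Classical Topology

/-- `H` is a 3-uniform hypergraph: every edge is a 3-element vertex set. -/
def IsThreeGraph {n : ℕ} (H : Finset (Finset (Fin n))) : Prop :=
  ∀ e ∈ H, e.card = 3

/-- `H` contains a (not necessarily induced) copy of `K4⁻`, the 3-graph on four
vertices with edges `{0,1,2}, {0,1,3}, {0,2,3}`. -/
def HasK4m {n : ℕ} (H : Finset (Finset (Fin n))) : Prop :=
  ∃ f : Fin 4 → Fin n, Function.Injective f ∧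
    ({f 0, f 1, f 2} : Finset (Fin n)) ∈ H ∧
    ({f 0, f 1, f 3} : Finset (Fin n)) ∈ H ∧
    ({f 0, f 2, f 3} : Finset (Fin n)) ∈ H

/-- `H` contains a (not necessarily induced) copy of `C5⁻`, the 3-graph on five
vertices with edges `{0,1,2}, {1,2,3}, {2,3,4}, {3,4,0}`. -/
def HasC5m {n : ℕ} (H : Finset (Finset (Fin n))) : Prop :=
  ∃ f : Fin 5 → Fin n, Function.Injective f ∧
    ({f 0, f 1, f 2} : Finset (Fin n)) ∈ H ∧
    ({f 1, f 2, f 3} : Finset (Fin n)) ∈ H ∧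
    ({f 2, f 3, f 4} : Finset (Fin n)) ∈ H ∧
    ({f 3, f 4, f 0} : Finset (Fin n)) ∈ H

/-- The edge density of a 3-uniform hypergraph on `n` vertices. -/
noncomputable def hDensity {n : ℕ} (H : Finset (Finset (Fin n))) : ℝ :=
  (H.card : ℝ) / (n.choose 3 : ℝ)

/-! ### Upper bound: cherries against edges -/

section Upper

variable {V : Type*} [Fintype V]

/-- The number of vertices `x` completing the pair `a, b` to an edge. -/
noncomputable def codeg (E : V → V → V → Prop) (a b : V) : ℝ :=
  ∑ x, if E a b x then (1 : ℝ) else 0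

/-- The number of paths `b - x - c` of length two in the link graph of `a`. -/
noncomputable def cherries (E : V → V → V → Prop) (a b c : V) : ℝ :=
  ∑ x, if E a b x ∧ E a c x then (1 : ℝ) else 0

/-- The weight of the cherries `b - x - c` at `a`, normalised by the codegree of `a, b`
truncated below at `t`. Up to the truncation it is the probability that a random neighbour
of `b` in the link of `a` is also a neighbour of `c`. -/
noncomputable def cherryWeight (E : V → V → V → Prop) (t : ℝ) (a b c : V) : ℝ :=
  cherries E a b c / max (codeg E a b) t

lemma codeg_nonneg (E : V → V → V → Prop) (a b : V) : 0 ≤ codeg E a b :=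
  Finset.sum_nonneg fun x _ => by split_ifs <;> norm_num

lemma cherries_nonneg (E : V → V → V → Prop) (a b c : V) : 0 ≤ cherries E a b c :=
  Finset.sum_nonneg fun x _ => by split_ifs <;> norm_num

lemma cherries_le_codeg (E : V → V → V → Prop) (a b c : V) :
    cherries E a b c ≤ codeg E a b := by
  refine Finset.sum_le_sum fun x _ => ?_
  by_cases h1 : E a b x <;> by_cases h2 : E a c x <;> simp [h1, h2]

lemma cherries_eq_zero {E : V → V → V → Prop} {a b c : V}
    (h : ¬ ∃ x, E a b x ∧ E a c x) : cherries E a b c = 0 :=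
  Finset.sum_eq_zero fun x _ => if_neg fun hx => h ⟨x, hx⟩

lemma cherries_le_one {E : V → V → V → Prop} {a b c : V}
    (h : ∀ x y, E a b x ∧ E a c x → E a b y ∧ E a c y → x = y) : cherries E a b c ≤ 1 := by
  unfold cherries
  rw [Finset.sum_boole]
  exact_mod_cast Finset.card_le_one.2 fun x hx y hy => by
    simp only [Finset.mem_filter, Finset.mem_univ, true_and] at hx hy
    exact h x y hx hy

lemma cherryWeight_nonneg (E : V → V → V → Prop) {t : ℝ} (ht : 0 < t) (a b c : V) :
    0 ≤ cherryWeight E t a b c :=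
  div_nonneg (cherries_nonneg E a b c) (le_max_of_le_right ht.le)

lemma cherryWeight_le_one (E : V → V → V → Prop) {t : ℝ} (ht : 0 < t) (a b c : V) :
    cherryWeight E t a b c ≤ 1 :=
  div_le_one_of_le₀ (le_max_of_le_left (cherries_le_codeg E a b c))
    (le_max_of_le_right ht.le)

lemma cherryWeight_le (E : V → V → V → Prop) {t : ℝ} (ht : 0 < t) (a b c : V) :
    cherryWeight E t a b c ≤ cherries E a b c / t :=
  div_le_div_of_nonneg_left (cherries_nonneg E a b c) ht (le_max_right _ _)

/-- The total cherry weight is, up to the truncation error, at least the number of ordered edges.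
In each link graph this says that the sum over all ordered adjacent pairs `(b, x)` of
`deg x / deg b` is at least the number of such pairs, which is AM-GM after pairing `(b, x)`
with `(x, b)`. -/
lemma sum_cherryWeight_ge (E : V → V → V → Prop)
    (hs : ∀ a b c, E a b c → E a c b) {t : ℝ} (ht : 0 < t) :
    (∑ a, ∑ b, ∑ c, if E a b c then (1 : ℝ) else 0) - t * (Fintype.card V : ℝ) ^ 2 ≤
      ∑ a, ∑ b, ∑ c, cherryWeight E t a b c := by
  have hs' : ∀ a b c, E a b c ↔ E a c b := fun a b c => ⟨hs a b c, hs a c b⟩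
  -- It suffices to bound the contribution of each link graph.
  suffices h : ∀ a, (∑ b, ∑ c, if E a b c then (1 : ℝ) else 0) - t * (Fintype.card V : ℝ) ≤
      ∑ b, ∑ c, cherryWeight E t a b c by
    have := Finset.sum_le_sum fun a (_ : a ∈ (Finset.univ : Finset V)) => h a
    rw [Finset.sum_sub_distrib] at this
    simp only [Finset.sum_const, Finset.card_univ, nsmul_eq_mul] at this
    linarith
  intro a
  set D : V → ℝ := fun b => max (codeg E a b) t with hD
  have hDpos : ∀ b, 0 < D b := fun b => lt_max_of_lt_right ht
  have h1 : ∑ b, ∑ c, cherryWeight E t a b c =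
      ∑ b, ∑ x, if E a b x then codeg E a x / D b else 0 := by
    refine Finset.sum_congr rfl fun b _ => ?_
    simp only [cherryWeight, cherries, ← Finset.sum_div]
    rw [Finset.sum_comm, Finset.sum_div]
    refine Finset.sum_congr rfl fun x _ => ?_
    by_cases h : E a b x
    · simp [h, codeg, hD, hs' a _ x]
    · simp [h]
  have h2 : ∀ b x, (if E a b x then D x / D b else 0) -
      (if E a b x then (if codeg E a x < t then (1 : ℝ) else 0) else 0) ≤
      if E a b x then codeg E a x / D b else 0 := by
    intro b x
    by_cases h : E a b x
    · simp only [h, if_true]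
      split_ifs with h'
      · have : D x = t := max_eq_right h'.le
        rw [this, sub_le_iff_le_add]
        have h3 : t / D b ≤ 1 := div_le_one_of_le₀ (le_max_right _ _) (hDpos b).le
        have h4 : 0 ≤ codeg E a x / D b := div_nonneg (codeg_nonneg _ _ _) (hDpos b).le
        linarith
      · have : D x = codeg E a x := max_eq_left (not_lt.1 h')
        rw [this]; simp
    · simp [h]
  have h3 : ∑ b, ∑ x, (if E a b x then (if codeg E a x < t then (1 : ℝ) else 0) else 0) ≤
      t * (Fintype.card V : ℝ) := by
    rw [Finset.sum_comm]
    have : ∀ x, ∑ b, (if E a b x then (if codeg E a x < t then (1 : ℝ) else 0) else 0) ≤ t := by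
      intro x
      by_cases h' : codeg E a x < t
      · simp only [h', if_true]
        refine le_trans (le_of_eq ?_) h'.le
        simp only [codeg, hs' a x]
      · simp [h', ht.le]
    refine (Finset.sum_le_sum fun x _ => this x).trans (le_of_eq ?_)
    simp [mul_comm]
  have h4 : ∑ b, ∑ x, (if E a b x then (1 : ℝ) else 0) ≤
      ∑ b, ∑ x, (if E a b x then D x / D b else 0) := by
    have hsw : ∑ b, ∑ x, (if E a b x then D x / D b else 0) =
        ∑ b, ∑ x, (if E a b x then D b / D x else 0) := by
      rw [Finset.sum_comm]
      simp only [hs' a]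
    have : ∑ b, ∑ x, 2 * (if E a b x then (1 : ℝ) else 0) ≤
        ∑ b, ∑ x, ((if E a b x then D x / D b else 0) +
          (if E a b x then D b / D x else 0)) := by
      refine Finset.sum_le_sum fun b _ => Finset.sum_le_sum fun x _ => ?_
      by_cases h : E a b x
      · simp only [h, if_true]
        have hb := hDpos b
        have hx := hDpos x
        rw [div_add_div _ _ hb.ne' hx.ne', le_div_iff₀ (mul_pos hb hx)]
        nlinarith [sq_nonneg (D x - D b)]
      · simp [h]
    simp only [Finset.sum_add_distrib, ← Finset.mul_sum] at this
    rw [← hsw] at this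
    linarith
  have h5 := Finset.sum_le_sum fun b (_ : b ∈ (Finset.univ : Finset V)) =>
    Finset.sum_le_sum fun x (_ : x ∈ (Finset.univ : Finset V)) => h2 b x
  simp only [Finset.sum_sub_distrib] at h5
  rw [h1]
  linarith

/-- The cherries closed up by an edge are the copies of `K4⁻`. Each triple `b, c, x` has
at most one apex `a`, so there are only cubically many of them. -/
lemma sum_edge_cherryWeight_le (E : V → V → V → Prop)
    (hK : ∀ b c x a a', E a b c → E a b x → E a c x → E a' b c → E a' b x → E a' c x → a = a')
    {t : ℝ} (ht : 0 < t) :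
    ∑ a, ∑ b, ∑ c, (if E a b c then cherryWeight E t a b c else 0) ≤
      (Fintype.card V : ℝ) ^ 3 / t := by
  have h1 : ∑ a, ∑ b, ∑ c, (if E a b c then cherryWeight E t a b c else 0) ≤
      ∑ a, ∑ b, ∑ c, ∑ x, (if E a b c ∧ E a b x ∧ E a c x then (1 : ℝ) else 0) / t := by
    refine Finset.sum_le_sum fun a _ => Finset.sum_le_sum fun b _ =>
      Finset.sum_le_sum fun c _ => ?_
    by_cases h : E a b c
    · simp only [h, if_true, true_and]
      refine (cherryWeight_le E ht a b c).trans (le_of_eq ?_)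
      rw [cherries, Finset.sum_div]
    · simp [h]
  refine h1.trans ?_
  simp only [← Finset.sum_div]
  refine div_le_div_of_nonneg_right ?_ ht.le
  have h2 : ∑ a, ∑ b, ∑ c, ∑ x, (if E a b c ∧ E a b x ∧ E a c x then (1 : ℝ) else 0) =
      ∑ b, ∑ c, ∑ x, ∑ a, (if E a b c ∧ E a b x ∧ E a c x then (1 : ℝ) else 0) := by
    rw [Finset.sum_comm]
    refine Finset.sum_congr rfl fun b _ => ?_
    rw [Finset.sum_comm]
    refine Finset.sum_congr rfl fun c _ => ?_
    rw [Finset.sum_comm]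
  rw [h2]
  have h3 : ∀ b c x, ∑ a, (if E a b c ∧ E a b x ∧ E a c x then (1 : ℝ) else 0) ≤ 1 := by
    intro b c x
    rw [Finset.sum_boole]
    exact_mod_cast Finset.card_le_one.2 fun a ha a' ha' => by
      simp only [Finset.mem_filter, Finset.mem_univ, true_and] at ha ha'
      exact hK b c x a a' ha.1 ha.2.1 ha.2.2 ha'.1 ha'.2.1 ha'.2.2
  refine (Finset.sum_le_sum fun b _ => Finset.sum_le_sum fun c _ =>
    Finset.sum_le_sum fun x _ => h3 b c x).trans (le_of_eq ?_)
  simp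
  ring

/-- The three cherry weights of a triple and its edge indicator share a total budget of `1`, up to
two errors. Paths at two different vertices of the triple must have the same centre, since otherwise
they form a `C5⁻`; hence they are unique and weigh at most `1 / t` each. If the triple is an edge,
its cherries are copies of `K4⁻`, and their weight is added on the right. -/
lemma budget (E : V → V → V → Prop)
    (h12 : ∀ a b c, E a b c → E b a c) (h23 : ∀ a b c, E a b c → E a c b)
    (hC : ∀ c x a b y, E c x a → E x a b → E a b y → E b y c → x = y)
    {t : ℝ} (ht : 0 < t) (a b c : V) :
    cherryWeight E t a b c + cherryWeight E t b c a + cherryWeight E t c a b +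
      (if E a b c then (1 : ℝ) else 0) ≤
    1 + 3 / t + ((if E a b c then cherryWeight E t a b c else 0) +
      (if E b c a then cherryWeight E t b c a else 0) +
      (if E c a b then cherryWeight E t c a b else 0)) := by
  have rot : ∀ a b c, E a b c → E b c a := fun a b c h => h23 _ _ _ (h12 _ _ _ h)
  have h3t : 0 ≤ 3 / t := by positivity
  by_cases hE : E a b c
  · have hE1 : E b c a := h23 _ _ _ (h12 _ _ _ hE)
    have hE2 : E c a b := h12 _ _ _ (h23 _ _ _ hE)
    simp only [hE, hE1, hE2, if_true]
    linarith
  have hE1 : ¬ E b c a := fun h => hE (h12 _ _ _ (h23 _ _ _ h))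
  have hE2 : ¬ E c a b := fun h => hE (h23 _ _ _ (h12 _ _ _ h))
  simp only [hE, hE1, hE2, if_false, add_zero]
  -- Cherries at two of the vertices have the same centre.
  have key : ∀ a b c x y, E a b x ∧ E a c x → E b c y ∧ E b a y → x = y :=
    fun a b c x y hx hy => hC c x a b y (rot _ _ _ hx.2) (rot _ _ _ (rot _ _ _ hx.1))
      (h12 _ _ _ hy.2) (h23 _ _ _ hy.1)
  -- Hence cherries at two of the vertices are unique.
  have two : ∀ a b c, (∃ x, E a b x ∧ E a c x) → (∃ y, E b c y ∧ E b a y) →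
      cherryWeight E t a b c ≤ 1 / t ∧ cherryWeight E t b c a ≤ 1 / t := by
    rintro a b c ⟨x, hx⟩ ⟨y, hy⟩
    refine ⟨(cherryWeight_le E ht _ _ _).trans (div_le_div_of_nonneg_right ?_ ht.le),
      (cherryWeight_le E ht _ _ _).trans (div_le_div_of_nonneg_right ?_ ht.le)⟩
    · exact cherries_le_one fun z w hz hw =>
        (key a b c z y hz hy).trans (key a b c w y hw hy).symm
    · exact cherries_le_one fun z w hz hw =>
        (key a b c x z hx hz).symm.trans (key a b c x w hx hw)
  have none : ∀ a b c, (¬ ∃ x, E a b x ∧ E a c x) → cherryWeight E t a b c = 0 := by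
    intro a b c h
    rw [cherryWeight, cherries_eq_zero h, zero_div]
  have e3 : 3 / t = 1 / t + 1 / t + 1 / t := by ring
  have hp : 0 < 1 / t := by positivity
  have o1 := cherryWeight_le_one E ht a b c
  have o2 := cherryWeight_le_one E ht b c a
  have o3 := cherryWeight_le_one E ht c a b
  by_cases A : ∃ x, E a b x ∧ E a c x <;> by_cases B : ∃ x, E b c x ∧ E b a x <;>
    by_cases C : ∃ x, E c a x ∧ E c b x
  · have := two a b c A B; have := two b c a B C; linarith
  · have := two a b c A B; have := none c a b C; linarith
  · have := two c a b C A; have := none b c a B; linarith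
  · have := none b c a B; have := none c a b C; linarith
  · have := two b c a B C; have := none a b c A; linarith
  · have := none a b c A; have := none c a b C; linarith
  · have := none a b c A; have := none b c a B; linarith
  · have := none a b c A; have := none b c a B; have := none c a b C; linarith

lemma sum_rotate (f : V → V → V → ℝ) :
    ∑ a, ∑ b, ∑ c, f b c a = ∑ a, ∑ b, ∑ c, f a b c := by
  rw [Finset.sum_comm]
  refine Finset.sum_congr rfl fun b _ => ?_
  rw [Finset.sum_comm]

/-- Summing the budget over all triples gives `4 · #edges ≤ n³ + o(n³)`, where edges are counted
as ordered triples. -/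
lemma ordered_edges_le (E : V → V → V → Prop)
    (h12 : ∀ a b c, E a b c → E b a c) (h23 : ∀ a b c, E a b c → E a c b)
    (hC : ∀ c x a b y, E c x a → E x a b → E a b y → E b y c → x = y)
    {t : ℝ} (ht : 0 < t) :
    4 * (∑ a, ∑ b, ∑ c, if E a b c then (1 : ℝ) else 0) ≤
      (Fintype.card V : ℝ) ^ 3 * (1 + 6 / t) + 3 * t * (Fintype.card V : ℝ) ^ 2 := by
  have rot : ∀ a b c, E a b c → E b c a := fun a b c h => h23 _ _ _ (h12 _ _ _ h)
  have hK : ∀ b c x a a', E a b c → E a b x → E a c x → E a' b c → E a' b x → E a' c x →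
      a = a' := fun b c x a a' h1 h2 h3 h4 h5 h6 =>
    hC b a c x a' (h12 _ _ _ h1) h3 (rot _ _ _ h6) (rot _ _ _ (rot _ _ _ h5))
  have hb := Finset.sum_le_sum fun a (_ : a ∈ (Finset.univ : Finset V)) =>
    Finset.sum_le_sum fun b (_ : b ∈ (Finset.univ : Finset V)) =>
    Finset.sum_le_sum fun c (_ : c ∈ (Finset.univ : Finset V)) => budget E h12 h23 hC ht a b c
  simp only [Finset.sum_add_distrib] at hb
  have r1 := sum_rotate (cherryWeight E t)
  have r2 := sum_rotate fun a b c => cherryWeight E t b c a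
  have r3 := sum_rotate fun a b c => if E a b c then cherryWeight E t a b c else 0
  have r4 := sum_rotate fun a b c => if E b c a then cherryWeight E t b c a else 0
  have l1 := sum_cherryWeight_ge E h23 ht
  have l2 := sum_edge_cherryWeight_le E hK ht
  simp only [Finset.sum_const, Finset.card_univ, nsmul_eq_mul] at hb
  have e : (Fintype.card V : ℝ) ^ 3 * (1 + 6 / t) = (Fintype.card V : ℝ) ^ 3 +
    (Fintype.card V : ℝ) * ((Fintype.card V : ℝ) * ((Fintype.card V : ℝ) * (3 / t))) +
    3 * ((Fintype.card V : ℝ) ^ 3 / t) := by ring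
  rw [e]
  linarith

end Upper

/-! ### Counting edges by ordered triples -/

/-- Every edge is counted by six ordered triples. -/
lemma card_ordered {n : ℕ} {H : Finset (Finset (Fin n))} (hH : IsThreeGraph H) :
    ((Finset.univ : Finset (Fin n × Fin n × Fin n)).filter
      fun p => ({p.1, p.2.1, p.2.2} : Finset (Fin n)) ∈ H).card = 6 * H.card := by
  rw [Finset.card_eq_sum_card_fiberwise (t := H)
    (f := fun p : Fin n × Fin n × Fin n => ({p.1, p.2.1, p.2.2} : Finset (Fin n)))
    (fun p hp => by simpa using hp)]
  rw [Finset.sum_const_nat (m := 6), mul_comm]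
  intro e he
  obtain ⟨x, y, z, hxy, hxz, hyz, rfl⟩ := Finset.card_eq_three.1 (hH e he)
  have : (((Finset.univ : Finset (Fin n × Fin n × Fin n)).filter
      fun p => ({p.1, p.2.1, p.2.2} : Finset (Fin n)) ∈ H).filter
      fun p => ({p.1, p.2.1, p.2.2} : Finset (Fin n)) = {x, y, z}) =
      {(x, y, z), (x, z, y), (y, x, z), (y, z, x), (z, x, y), (z, y, x)} := by
    ext ⟨a, b, c⟩
    simp only [Finset.mem_filter, Finset.mem_univ, true_and, Finset.mem_insert,
      Finset.mem_singleton, Prod.mk.injEq]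
    constructor
    · rintro ⟨-, h⟩
      have hx : x ∈ ({a, b, c} : Finset (Fin n)) := by rw [h]; simp
      have hy : y ∈ ({a, b, c} : Finset (Fin n)) := by rw [h]; simp
      have hz : z ∈ ({a, b, c} : Finset (Fin n)) := by rw [h]; simp
      simp only [Finset.mem_insert, Finset.mem_singleton] at hx hy hz
      grind
    · intro h
      have h' : ({a, b, c} : Finset (Fin n)) = {x, y, z} := by
        ext w
        simp only [Finset.mem_insert, Finset.mem_singleton]
        grind
      exact ⟨h' ▸ he, h'⟩
  rw [this]
  simp [Finset.card_insert_of_notMem, hxy, hxz, hyz, hxy.symm, hxz.symm, hyz.symm]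

/-- An edge of a 3-graph has three distinct vertices. -/
lemma edge_distinct {n : ℕ} {H : Finset (Finset (Fin n))} (hH : IsThreeGraph H)
    {a b c : Fin n} (h : ({a, b, c} : Finset (Fin n)) ∈ H) : a ≠ b ∧ a ≠ c ∧ b ≠ c := by
  have h3 := hH _ h
  refine ⟨?_, ?_, ?_⟩ <;> rintro rfl
  · have := Finset.card_le_two (a := a) (b := c)
    simp at h3; omega
  · have := Finset.card_le_two (a := a) (b := b)
    rw [Finset.pair_comm b a, Finset.insert_idem] at h3; omega
  · have := Finset.card_le_two (a := a) (b := b)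
    simp at h3; omega

/-- The upper bound on the number of edges, with a truncation parameter `t` left free. -/
lemma card_le_of_c5m_free {n : ℕ} {H : Finset (Finset (Fin n))} (hH : IsThreeGraph H)
    (hC : ¬ HasC5m H) {t : ℝ} (ht : 0 < t) :
    24 * (H.card : ℝ) ≤ (n : ℝ) ^ 3 * (1 + 6 / t) + 3 * t * (n : ℝ) ^ 2 := by
  have key := ordered_edges_le (V := Fin n) (fun a b c => ({a, b, c} : Finset (Fin n)) ∈ H)
    (fun a b c h => by rwa [Finset.insert_comm]) (fun a b c h => by rwa [Finset.pair_comm])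
    (by
      intro c x a b y h1 h2 h3 h4
      by_contra hxy
      have d1 := edge_distinct hH h1
      have d2 := edge_distinct hH h2
      have d3 := edge_distinct hH h3
      have d4 := edge_distinct hH h4
      refine hC ⟨![c, x, a, b, y], ?_, h1, h2, h3, h4⟩
      intro i j hij
      fin_cases i <;> fin_cases j <;> simp_all) ht
  have e : (∑ a : Fin n, ∑ b : Fin n, ∑ c : Fin n,
      if ({a, b, c} : Finset (Fin n)) ∈ H then (1 : ℝ) else 0) = 6 * (H.card : ℝ) := by
    have := card_ordered hH
    rw [Finset.card_filter] at this
    simp only [Fintype.sum_prod_type] at this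
    exact_mod_cast this
  rw [Fintype.card_fin] at key
  have key' : 4 * (6 * (H.card : ℝ)) ≤ (n : ℝ) ^ 3 * (1 + 6 / t) + 3 * t * (n : ℝ) ^ 2 := by
    rw [← e]
    convert key
  linarith

/-! ### Lower bound: the iterated ternary construction -/

/-- The recursive blow-up of a single edge on the natural numbers: `a, b, c` form an edge
when their ternary expansions agree below some position `s`, and their digits at
position `s` are distinct. -/
def TernaryEdge (a b c : ℕ) : Prop :=
  ∃ s, (a % 3 ^ s = b % 3 ^ s ∧ b % 3 ^ s = c % 3 ^ s) ∧
    a / 3 ^ s % 3 ≠ b / 3 ^ s % 3 ∧ a / 3 ^ s % 3 ≠ c / 3 ^ s % 3 ∧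
    b / 3 ^ s % 3 ≠ c / 3 ^ s % 3

/-- The position of the first differing ternary digit is determined by the pair. -/
lemma position_unique {a b s s' : ℕ} (h : a % 3 ^ s = b % 3 ^ s)
    (hd : a / 3 ^ s % 3 ≠ b / 3 ^ s % 3) (h' : a % 3 ^ s' = b % 3 ^ s')
    (hd' : a / 3 ^ s' % 3 ≠ b / 3 ^ s' % 3) : s = s' := by
  have main : ∀ s s' : ℕ, s < s' → a % 3 ^ s = b % 3 ^ s → a % 3 ^ s' = b % 3 ^ s' →
      a / 3 ^ s % 3 = b / 3 ^ s % 3 := by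
    intro s s' hlt h h'
    have h1 : a % 3 ^ (s + 1) = b % 3 ^ (s + 1) := by
      have hdvd : 3 ^ (s + 1) ∣ 3 ^ s' := pow_dvd_pow 3 hlt
      rw [← Nat.mod_mod_of_dvd a hdvd, h', Nat.mod_mod_of_dvd b hdvd]
    rw [Nat.mod_pow_succ, Nat.mod_pow_succ, h] at h1
    exact Nat.eq_of_mul_eq_mul_left (pow_pos (by norm_num) s) (Nat.add_left_cancel h1)
  rcases lt_trichotomy s s' with hlt | heq | hgt
  · exact absurd (main s s' hlt h h') hd
  · exact heq
  · exact absurd (main s' s hgt h' h) hd'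

lemma TernaryEdge.swap {a b c : ℕ} (h : TernaryEdge a b c) : TernaryEdge b a c := by
  obtain ⟨s, ⟨h1, h2⟩, h3, h4, h5⟩ := h
  exact ⟨s, ⟨h1.symm, h1.trans h2⟩, h3.symm, h5, h4⟩

lemma TernaryEdge.rotate {a b c : ℕ} (h : TernaryEdge a b c) : TernaryEdge b c a := by
  obtain ⟨s, ⟨h1, h2⟩, h3, h4, h5⟩ := h
  exact ⟨s, ⟨h2, (h1.trans h2).symm⟩, h5, h3.symm, h4.symm⟩

/-- In a `C5⁻` the pairs of `v0, v1, v2, v3` would all first differ at the same ternary position,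
which only has three possible digits. -/
lemma ternary_c5m_free {v0 v1 v2 v3 v4 : ℕ} (h1 : TernaryEdge v0 v1 v2)
    (h2 : TernaryEdge v1 v2 v3) (h3 : TernaryEdge v2 v3 v4) (h4 : TernaryEdge v3 v4 v0) :
    False := by
  obtain ⟨s, ⟨a1, a2⟩, a3, a4, a5⟩ := h1
  obtain ⟨s2, ⟨b1, b2⟩, b3, b4, b5⟩ := h2
  obtain rfl := position_unique a2 a5 b1 b3
  obtain ⟨s3, ⟨c1, c2⟩, c3, c4, c5⟩ := h3
  obtain rfl := position_unique b2 b5 c1 c3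
  obtain ⟨s4, ⟨d1, d2⟩, d3, d4, d5⟩ := h4
  obtain rfl := position_unique c2 c5 d1 d3
  omega

/-- Ordered edges of the ternary construction on `{0, …, n - 1}`. -/
noncomputable def ternaryTriples (n : ℕ) : Finset (ℕ × ℕ × ℕ) :=
  (Finset.range n ×ˢ Finset.range n ×ˢ Finset.range n).filter
    fun p => TernaryEdge p.1 p.2.1 p.2.2

/-- Splitting by the last ternary digit: either the three last digits are distinct, or they
agree and the remaining digits form an edge. -/
lemma ternaryTriples_rec (n : ℕ) :
    6 * (n / 3) ^ 3 + 3 * (ternaryTriples (n / 3)).card ≤ (ternaryTriples n).card := by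
  set k := n / 3 with hk
  let R : Finset (ℕ × ℕ × ℕ) := Finset.range k ×ˢ Finset.range k ×ˢ Finset.range k
  let P : Finset (Fin 3 × Fin 3 × Fin 3) :=
    Finset.univ.filter fun p => p.1 ≠ p.2.1 ∧ p.1 ≠ p.2.2 ∧ p.2.1 ≠ p.2.2
  let Q : Finset (Fin 3 × Fin 3 × Fin 3) :=
    Finset.univ.filter fun p => p.1 = p.2.1 ∧ p.1 = p.2.2
  have hP : P.card = 6 := by simp only [P]; decide
  have hQ : Q.card = 3 := by simp only [Q]; decide
  have hdisj : Disjoint (P ×ˢ R) (Q ×ˢ ternaryTriples k) := by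
    rw [Finset.disjoint_left]
    rintro ⟨p, r⟩ h1 h2
    simp only [P, Q, Finset.mem_product, Finset.mem_filter] at h1 h2
    exact h1.1.2.1 h2.1.2.1
  have hcard : ((P ×ˢ R) ∪ (Q ×ˢ ternaryTriples k)).card =
      6 * k ^ 3 + 3 * (ternaryTriples k).card := by
    rw [Finset.card_union_of_disjoint hdisj, Finset.card_product P, Finset.card_product Q, hP, hQ]
    simp only [R, Finset.card_product, Finset.card_range]
    ring
  rw [← hcard]
  refine Finset.card_le_card_of_injOn
    (fun q => (3 * q.2.1 + q.1.1, 3 * q.2.2.1 + q.1.2.1, 3 * q.2.2.2 + q.1.2.2)) ?_ ?_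
  · rintro ⟨⟨i, j, l⟩, a, b, c⟩ h
    simp only [Finset.coe_union, Set.mem_union, Finset.mem_coe, Finset.mem_product, P, Q, R,
      Finset.mem_filter, Finset.mem_univ, true_and, Finset.mem_range, ternaryTriples] at h ⊢
    have hi := i.2
    have hj := j.2
    have hl := l.2
    rcases h with ⟨⟨h1, h2, h3⟩, ha, hb, hc⟩ | ⟨⟨h1, h2⟩, ⟨ha, hb, hc⟩, s, ⟨e1, e2⟩, e3, e4, e5⟩
    · refine ⟨⟨by omega, by omega, by omega⟩, 0, ?_⟩
      simp only [ne_eq, Fin.ext_iff] at h1 h2 h3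
      simp only [pow_zero, Nat.mod_one, Nat.div_one]
      refine ⟨⟨trivial, trivial⟩, ?_, ?_, ?_⟩ <;> omega
    · subst h1 h2
      have hdiv : ∀ a : ℕ, (3 * a + i) / 3 ^ (s + 1) = a / 3 ^ s := by
        intro a
        rw [pow_succ', ← Nat.div_div_eq_div_mul]
        congr 1
        omega
      have hmod : ∀ a : ℕ, (3 * a + i) % 3 ^ (s + 1) = i + 3 * (a % 3 ^ s) := by
        intro a
        rw [pow_succ', Nat.mod_mul]
        congr 1
        · omega
        · congr 2; omega
      refine ⟨⟨by omega, by omega, by omega⟩, s + 1, ?_⟩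
      simp only [hdiv, hmod, e1, e2]
      exact ⟨⟨trivial, trivial⟩, e3, e4, e5⟩
  · rintro ⟨⟨i, j, l⟩, a, b, c⟩ - ⟨⟨i', j', l'⟩, a', b', c'⟩ - h
    simp only [Prod.mk.injEq, Fin.ext_iff] at h ⊢
    have := i.2
    have := j.2
    have := l.2
    have := i'.2
    have := j'.2
    have := l'.2
    omega

/-- The constant `9` absorbs the rounding in `n / 3` throughout the recursion. -/
lemma ternaryTriples_card_ge (n : ℕ) :
    (n : ℝ) ^ 3 - 9 * (n : ℝ) ^ 2 ≤ 4 * ((ternaryTriples n).card : ℝ) := by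
  induction n using Nat.strong_induction_on with
  | _ n ih =>
    rcases Nat.eq_zero_or_pos n with rfl | hn
    · simp
    have h1 := ih (n / 3) (by omega)
    have h2 : ((6 * (n / 3) ^ 3 + 3 * (ternaryTriples (n / 3)).card : ℕ) : ℝ) ≤
      ((ternaryTriples n).card : ℝ) := by exact_mod_cast ternaryTriples_rec n
    push_cast at h2
    set k : ℝ := ((n / 3 : ℕ) : ℝ) with hk
    have hk0 : 0 ≤ k := Nat.cast_nonneg _
    obtain ⟨r, hr, hnr⟩ : ∃ r : ℕ, r ≤ 2 ∧ n = 3 * (n / 3) + r := ⟨n % 3, by omega, by omega⟩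
    have hn' : (n : ℝ) = 3 * k + r := by rw [hk]; exact_mod_cast hnr
    rw [hn']
    have hr' : (r : ℝ) ≤ 2 := by exact_mod_cast hr
    have hr0 : (0 : ℝ) ≤ r := Nat.cast_nonneg _
    nlinarith [mul_nonneg hk0 hr0, mul_nonneg (mul_nonneg hk0 hk0) (sub_nonneg.2 hr'),
      mul_nonneg (mul_nonneg hk0 hr0) (sub_nonneg.2 hr'), mul_nonneg hr0 (sub_nonneg.2 hr'),
      mul_nonneg (mul_nonneg hr0 hr0) (sub_nonneg.2 hr'), mul_nonneg hk0 hk0]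

/-- The ternary construction on `Fin n`, as a family of vertex sets. -/
noncomputable def ternaryGraph (n : ℕ) : Finset (Finset (Fin n)) :=
  Finset.univ.filter fun e => ∃ a b c : Fin n, e = {a, b, c} ∧ TernaryEdge a b c

lemma mem_ternaryGraph {n : ℕ} (a b c : Fin n) :
    ({a, b, c} : Finset (Fin n)) ∈ ternaryGraph n ↔ TernaryEdge a b c := by
  simp only [ternaryGraph, Finset.mem_filter, Finset.mem_univ, true_and]
  refine ⟨?_, fun h => ⟨a, b, c, rfl, h⟩⟩
  rintro ⟨x, y, z, h, hE⟩
  have hxy : x ≠ y := by rintro rfl; obtain ⟨s, -, h, -⟩ := hE; exact h rfl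
  have hxz : x ≠ z := by rintro rfl; obtain ⟨s, -, -, h, -⟩ := hE; exact h rfl
  have hyz : y ≠ z := by rintro rfl; obtain ⟨s, -, -, -, h⟩ := hE; exact h rfl
  have hx : x ∈ ({a, b, c} : Finset (Fin n)) := by rw [h]; simp
  have hy : y ∈ ({a, b, c} : Finset (Fin n)) := by rw [h]; simp
  have hz : z ∈ ({a, b, c} : Finset (Fin n)) := by rw [h]; simp
  simp only [Finset.mem_insert, Finset.mem_singleton] at hx hy hz
  rcases hx with rfl | rfl | rfl <;> rcases hy with rfl | rfl | rfl <;>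
    rcases hz with rfl | rfl | rfl <;> first
    | exact absurd rfl hxy
    | exact absurd rfl hxz
    | exact absurd rfl hyz
    | exact hE
    | exact hE.swap
    | exact hE.rotate
    | exact hE.rotate.rotate
    | exact hE.swap.rotate
    | exact hE.swap.rotate.rotate

lemma ternaryGraph_isThreeGraph (n : ℕ) : IsThreeGraph (ternaryGraph n) := by
  intro e he
  simp only [ternaryGraph, Finset.mem_filter, Finset.mem_univ, true_and] at he
  obtain ⟨x, y, z, rfl, s, -, h1, h2, h3⟩ := he
  rw [Finset.card_eq_three]
  refine ⟨x, y, z, ?_, ?_, ?_, rfl⟩ <;> rintro rfl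
  exacts [h1 rfl, h2 rfl, h3 rfl]

lemma ternaryGraph_c5m_free (n : ℕ) : ¬ HasC5m (ternaryGraph n) := by
  rintro ⟨f, -, h1, h2, h3, h4⟩
  rw [mem_ternaryGraph] at h1 h2 h3 h4
  exact ternary_c5m_free h1 h2 h3 h4

lemma ternaryGraph_card_ge (n : ℕ) :
    (n : ℝ) ^ 3 - 9 * (n : ℝ) ^ 2 ≤ 24 * ((ternaryGraph n).card : ℝ) := by
  have h1 := ternaryTriples_card_ge n
  have h2 : (ternaryTriples n).card ≤ 6 * (ternaryGraph n).card := by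
    rw [← card_ordered (ternaryGraph_isThreeGraph n)]
    refine Finset.card_le_card_of_surjOn
      (fun p : Fin n × Fin n × Fin n => ((p.1 : ℕ), (p.2.1 : ℕ), (p.2.2 : ℕ))) ?_
    rintro ⟨a, b, c⟩ h
    simp only [ternaryTriples, Finset.coe_filter, Finset.mem_product, Finset.mem_range,
      Set.mem_ofPred_eq] at h
    obtain ⟨⟨ha, hb, hc⟩, hE⟩ := h
    refine ⟨(⟨a, ha⟩, ⟨b, hb⟩, ⟨c, hc⟩), ?_, rfl⟩
    simp only [Finset.coe_filter, Finset.mem_univ, true_and, Set.mem_ofPred_eq]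
    rw [mem_ternaryGraph]
    exact hE
  have h3 : ((ternaryTriples n).card : ℝ) ≤ 6 * ((ternaryGraph n).card : ℝ) := by
    exact_mod_cast h2
  linarith

/-! ### The limit of the densities -/

lemma tendsto_div_sub (c : ℝ) : Tendsto (fun n : ℕ => (n : ℝ) / (n - c)) atTop (𝓝 1) := by
  have h : Tendsto (fun n : ℕ => 1 + c / ((n : ℝ) - c)) atTop (𝓝 (1 + 0)) :=
    tendsto_const_nhds.add (Tendsto.const_div_atTop
      (tendsto_atTop_add_const_right _ (-c) tendsto_natCast_atTop_atTop) c)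
  rw [add_zero] at h
  refine h.congr' ?_
  filter_upwards [tendsto_natCast_atTop_atTop.eventually_gt_atTop c] with n hn
  have : (n : ℝ) - c ≠ 0 := (sub_pos.2 hn).ne'
  field_simp
  ring

/-- The maximal edge density of `C5⁻`-free 3-graphs on `n ≥ 5` vertices tends
to `1/4` (the Turán density of `C5⁻`). -/
theorem c5m_turan_density (D : ℕ → ℝ)
    (hD : ∀ n, 5 ≤ n →
      IsGreatest {d : ℝ | ∃ H : Finset (Finset (Fin n)),
        IsThreeGraph H ∧ ¬ HasC5m H ∧ d = hDensity H} (D n)) :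
    Tendsto D atTop (𝓝 (1 / 4 : ℝ)) := by
  -- `A n` is the ratio of `n³` to `n (n - 1) (n - 2)`.
  let A : ℕ → ℝ := fun n => (n : ℝ) / (n - 1) * ((n : ℝ) / (n - 2))
  have hA : Tendsto A atTop (𝓝 1) := by
    simpa using (tendsto_div_sub 1).mul (tendsto_div_sub 2)
  have hlow : Tendsto (fun n : ℕ => 1 / 4 * (1 - 9 / (n : ℝ)) * A n) atTop (𝓝 (1 / 4)) := by
    have h := ((tendsto_const_nhds (x := (1 : ℝ))).sub
      (tendsto_const_div_atTop_nhds_zero_nat (9 : ℝ))).const_mul (1 / 4) |>.mul hA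
    simpa using h
  have hupp : Tendsto (fun n : ℕ => 1 / 4 * (1 + 9 / √(n : ℝ)) * A n) atTop (𝓝 (1 / 4)) := by
    have h0 : Tendsto (fun n : ℕ => 9 / √(n : ℝ)) atTop (𝓝 0) :=
      Tendsto.const_div_atTop (Real.tendsto_sqrt_atTop.comp tendsto_natCast_atTop_atTop) 9
    have h := ((tendsto_const_nhds (x := (1 : ℝ))).add h0).const_mul (1 / 4) |>.mul hA
    simpa using h
  have hdens : ∀ n : ℕ, 5 ≤ n → ∀ H : Finset (Finset (Fin n)),
      hDensity H = 24 * (H.card : ℝ) / (n : ℝ) ^ 3 * (1 / 4 * A n) := by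
    intro n hn H
    have hn' : (5 : ℝ) ≤ n := by exact_mod_cast hn
    have h0 : (n : ℝ) ≠ 0 := by linarith
    have h1 : (n : ℝ) - 1 ≠ 0 := by linarith
    have h2 : (n : ℝ) - 2 ≠ 0 := by linarith
    have hch : ((n.choose 3 : ℕ) : ℝ) = n * (n - 1) * (n - 2) / 6 := by
      rw [Nat.cast_choose_eq_descPochhammer_div]
      simp [descPochhammer_succ_right, Nat.factorial]
    rw [hDensity, hch]
    simp only [A]
    field_simp
    ring
  have hApos : ∀ n : ℕ, 5 ≤ n → 0 ≤ 1 / 4 * A n := by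
    intro n hn
    have hn' : (5 : ℝ) ≤ n := by exact_mod_cast hn
    have h1 : (0 : ℝ) ≤ (n : ℝ) - 1 := by linarith
    have h2 : (0 : ℝ) ≤ (n : ℝ) - 2 := by linarith
    simp only [A]
    positivity
  refine tendsto_of_tendsto_of_tendsto_of_le_of_le' hlow hupp ?_ ?_
  · filter_upwards [eventually_ge_atTop 5] with n hn
    have hle : hDensity (ternaryGraph n) ≤ D n :=
      (hD n hn).2 ⟨_, ternaryGraph_isThreeGraph n, ternaryGraph_c5m_free n, rfl⟩
    refine le_trans ?_ hle
    have hn' : (5 : ℝ) ≤ n := by exact_mod_cast hn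
    have h0 : (0 : ℝ) < n := by linarith
    rw [hdens n hn]
    have h : 1 - 9 / (n : ℝ) ≤ 24 * ((ternaryGraph n).card : ℝ) / (n : ℝ) ^ 3 := by
      rw [le_div_iff₀ (by positivity)]
      refine le_trans (le_of_eq ?_) (ternaryGraph_card_ge n)
      field_simp
    have := mul_le_mul_of_nonneg_right h (hApos n hn)
    linarith
  · filter_upwards [eventually_ge_atTop 5] with n hn
    obtain ⟨H, hH, hC, hd⟩ := (hD n hn).1
    have hn' : (5 : ℝ) ≤ n := by exact_mod_cast hn
    have h0 : (0 : ℝ) < n := by linarith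
    have hs : 0 < √(n : ℝ) := Real.sqrt_pos.2 h0
    rw [hd, hdens n hn]
    have h : 24 * (H.card : ℝ) / (n : ℝ) ^ 3 ≤ 1 + 9 / √(n : ℝ) := by
      rw [div_le_iff₀ (by positivity)]
      -- The truncation `t = √n` balances the two error terms.
      refine (card_le_of_c5m_free hH hC hs).trans (le_of_eq ?_)
      have hsq : (n : ℝ) = √(n : ℝ) ^ 2 := (Real.sq_sqrt h0.le).symm
      generalize √(n : ℝ) = r at hs hsq
      rw [hsq]
      field_simp
      ring
    have := mul_le_mul_of_nonneg_right h (hApos n hn)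
    linarith
end
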